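/- Let H_c and E be m×n real matrices with spectral norms ‖H_c‖ ≤ β and ‖E‖ ≤ ρ, let Σ be an n×n real positive-definite matrix, set H := H_c + E, Ω_c := I_m + H_cΣH_cᵀ, and Ω_H := I_m + HΣHᵀ. Then for every η' > 0 and every y ∈ ℝ^m satisfying (1/m)·yᵀΩ_c⁻¹y > 1 − η', one has yᵀΩ_H⁻¹y ≥ m · max(1 − η', 0) / (1 + ρ(ρ + 2β) · λ_max(Σ)). -/

import Mathlib

open Matrix

/-- The spectral (operator) norm of a real matrix:
`‖M‖ = max over vectors x with ‖x‖₂ ≤ 1 of ‖M x‖₂`. -/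
noncomputable def specNorm {m n : ℕ} (M : Matrix (Fin m) (Fin n) ℝ) : ℝ :=
  sSup {c : ℝ | ∃ x : Fin n → ℝ,
    Real.sqrt (∑ i, x i ^ 2) ≤ 1 ∧ c = Real.sqrt (∑ i, (M *ᵥ x) i ^ 2)}

/-! Perturbing `H` by `E` changes `H Σ Hᴴ` by a Hermitian matrix of operator norm at most
`κ = ‖E‖ (‖E‖ + 2 ‖H‖) ‖Σ‖`. As `1 ≤ Ω_H` in the Loewner order, this change is at most `κ Ω_H`,
so that `Ω_{H+E} ≤ (1 + κ) Ω_H`. Inversion is antitone on positive definite matrices, hence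
`Ω_H⁻¹ ≤ (1 + κ) Ω_{H+E}⁻¹`, and the theorem is this inequality evaluated at the vector `y`. -/

open scoped Matrix.Norms.L2Operator in
lemma specNorm_eq_l2_opNorm {m n : ℕ} (M : Matrix (Fin m) (Fin n) ℝ) : specNorm M = ‖M‖ := by
  rw [l2_opNorm_def, ← ContinuousLinearMap.sSup_unitClosedBall_eq_norm, specNorm]
  congr 1
  ext c
  simp only [Set.mem_ofPred_eq, Set.mem_image, mem_closedBall_zero_iff,
    (WithLp.toLp_surjective 2).exists, EuclideanSpace.norm_eq, Real.norm_eq_abs, sq_abs,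
    eq_comm (a := c)]
  rfl

section LoewnerOrder

open scoped MatrixOrder ComplexOrder Matrix.Norms.L2Operator

variable {𝕜 m n : Type*} [RCLike 𝕜] [Fintype n]

lemma re_dotProduct_mulVec_mono {A B : Matrix n n 𝕜} (hAB : A ≤ B) (x : n → 𝕜) :
    RCLike.re (star x ⬝ᵥ (A *ᵥ x)) ≤ RCLike.re (star x ⬝ᵥ (B *ᵥ x)) := by
  have h := PosSemidef.re_dotProduct_nonneg hAB x
  rwa [sub_mulVec, dotProduct_sub, map_sub, sub_nonneg] at h

section DecidableEq

variable [DecidableEq n]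

lemma l2_opNorm_eq_norm_eigenvalues {A : Matrix n n 𝕜} (hA : A.IsHermitian) :
    ‖A‖ = ‖hA.eigenvalues‖ := by
  conv_lhs => rw [hA.spectral_theorem]
  rw [Unitary.conjStarAlgAut_apply, ← Unitary.coe_star, CStarRing.norm_mul_coe_unitary,
    CStarRing.norm_coe_unitary_mul, l2_opNorm_diagonal]
  simp only [Pi.norm_def, Function.comp_apply, nnnorm_algebraMap']

lemma l2_opNorm_eq_iSup_eigenvalues {A : Matrix n n 𝕜} (hA : A.PosSemidef) :
    ‖A‖ = ⨆ i, hA.isHermitian.eigenvalues i := by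
  rw [l2_opNorm_eq_norm_eigenvalues hA.isHermitian]
  apply le_antisymm
  · refine (pi_norm_le_iff_of_nonneg (Real.iSup_nonneg hA.eigenvalues_nonneg)).2 fun i ↦ ?_
    rw [Real.norm_of_nonneg (hA.eigenvalues_nonneg i)]
    exact le_ciSup (Set.finite_range _).bddAbove i
  · exact Real.iSup_le (fun i ↦ (Real.le_norm_self _).trans (norm_le_pi_norm _ i)) (norm_nonneg _)

lemma le_l2_opNorm_smul_one {A : Matrix n n 𝕜} (hA : A.IsHermitian) :
    A ≤ ‖A‖ • (1 : Matrix n n 𝕜) := by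
  rw [l2_opNorm_eq_norm_eigenvalues hA, ← Algebra.algebraMap_eq_smul_one]
  refine le_algebraMap_of_spectrum_le ?_ hA
  rw [hA.spectrum_real_eq_range_eigenvalues, Set.forall_mem_range]
  exact fun i ↦ (Real.le_norm_self _).trans (norm_le_pi_norm _ i)

-- Both Schur complements of `fromBlocks B 1 1 A⁻¹` are read off: `B - A` and `A⁻¹ - B⁻¹`.
lemma inv_antitone_of_posDef {A B : Matrix n n 𝕜} (hA : A.PosDef) (hAB : A ≤ B) : B⁻¹ ≤ A⁻¹ := by
  have hB : B.PosDef := by simpa only [add_sub_cancel] using hA.add_posSemidef hAB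
  have := hA.isUnit.invertible
  have := hA.inv.isUnit.invertible
  have := hB.isUnit.invertible
  have hblock : (fromBlocks B 1 1ᴴ A⁻¹).PosSemidef :=
    (PosDef.fromBlocks₂₂ B 1 hA.inv).2 (by simpa using! hAB)
  simpa using! (PosDef.fromBlocks₁₁ 1 A⁻¹ hB).1 hblock

lemma inv_le_smul_inv_of_posDef {A B : Matrix n n 𝕜} {c : ℝ} (hA : A.PosDef) (hc : 0 < c)
    (hAB : A ≤ c • B) : B⁻¹ ≤ c • A⁻¹ := by
  have hinv : (c⁻¹ • A)⁻¹ = c • A⁻¹ := by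
    have hdet : IsUnit A.det := (isUnit_iff_isUnit_det A).1 hA.isUnit
    exact inv_eq_left_inv (by simp [smul_smul, hc.ne', nonsing_inv_mul A hdet])
  rw [← hinv]
  exact inv_antitone_of_posDef (hA.smul (inv_pos.2 hc)) ((inv_smul_le_iff_of_pos hc).2 hAB)

lemma l2_opNorm_mul_mul_conjTranspose_add_sub_le [Fintype m] [DecidableEq m]
    (H E : Matrix m n 𝕜) (S : Matrix n n 𝕜) :
    ‖(H + E) * S * (H + E)ᴴ - H * S * Hᴴ‖ ≤ ‖E‖ * (‖E‖ + 2 * ‖H‖) * ‖S‖ := by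
  have hmul (F G : Matrix m n 𝕜) : ‖F * S * Gᴴ‖ ≤ ‖F‖ * ‖S‖ * ‖G‖ := by
    grw [l2_opNorm_mul, l2_opNorm_mul, l2_opNorm_conjTranspose]
  calc ‖(H + E) * S * (H + E)ᴴ - H * S * Hᴴ‖
      = ‖E * S * Eᴴ + E * S * Hᴴ + H * S * Eᴴ‖ := by
        congr 1
        simp only [conjTranspose_add, Matrix.add_mul, Matrix.mul_add]
        abel
    _ ≤ ‖E‖ * ‖S‖ * ‖E‖ + ‖E‖ * ‖S‖ * ‖H‖ + ‖H‖ * ‖S‖ * ‖E‖ := by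
        grw [norm_add₃_le, hmul, hmul, hmul]
    _ = ‖E‖ * (‖E‖ + 2 * ‖H‖) * ‖S‖ := by ring

end DecidableEq

variable [DecidableEq m]

/-- The matrix `Ω_H = 1 + H S Hᴴ`: the covariance of `H x + ε` when the signal `x` has covariance
`S` and `ε` is independent white noise of unit variance. -/
def observationCov (H : Matrix m n 𝕜) (S : Matrix n n 𝕜) : Matrix m m 𝕜 :=
  1 + H * S * Hᴴ

lemma one_le_observationCov [Finite m] {S : Matrix n n 𝕜} (hS : S.PosSemidef)
    (H : Matrix m n 𝕜) : 1 ≤ observationCov H S :=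
  le_add_of_nonneg_right (hS.mul_mul_conjTranspose_same H).nonneg

lemma observationCov_posDef [Finite m] {S : Matrix n n 𝕜} (hS : S.PosSemidef)
    (H : Matrix m n 𝕜) : (observationCov H S).PosDef :=
  PosDef.one.add_posSemidef (hS.mul_mul_conjTranspose_same H)

variable [Fintype m] [DecidableEq n] {S : Matrix n n 𝕜}

lemma observationCov_add_le (hS : S.PosSemidef) (H E : Matrix m n 𝕜) :
    observationCov (H + E) S ≤
      (1 + ‖E‖ * (‖E‖ + 2 * ‖H‖) * ‖S‖) • observationCov H S := by
  set Δ := (H + E) * S * (H + E)ᴴ - H * S * Hᴴ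
  have hΔ : Δ.IsHermitian :=
    (hS.mul_mul_conjTranspose_same (H + E)).isHermitian.sub
      (hS.mul_mul_conjTranspose_same H).isHermitian
  calc observationCov (H + E) S
      = observationCov H S + Δ := by simp only [observationCov, Δ]; abel
    _ ≤ observationCov H S + ‖Δ‖ • 1 := by grw [← le_l2_opNorm_smul_one hΔ]
    _ ≤ observationCov H S + (‖E‖ * (‖E‖ + 2 * ‖H‖) * ‖S‖) • observationCov H S := by
        grw [l2_opNorm_mul_mul_conjTranspose_add_sub_le H E S, one_le_observationCov hS H]
    _ = (1 + ‖E‖ * (‖E‖ + 2 * ‖H‖) * ‖S‖) • observationCov H S := by rw [add_smul, one_smul]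

lemma inv_observationCov_le (hS : S.PosSemidef) (H E : Matrix m n 𝕜) :
    (observationCov H S)⁻¹ ≤
      (1 + ‖E‖ * (‖E‖ + 2 * ‖H‖) * ‖S‖) • (observationCov (H + E) S)⁻¹ :=
  inv_le_smul_inv_of_posDef (observationCov_posDef hS (H + E)) (by positivity)
    (observationCov_add_le hS H E)

lemma re_dotProduct_inv_observationCov_le (hS : S.PosSemidef) (H E : Matrix m n 𝕜) (y : m → 𝕜) :
    RCLike.re (star y ⬝ᵥ ((observationCov H S)⁻¹ *ᵥ y)) ≤
      (1 + ‖E‖ * (‖E‖ + 2 * ‖H‖) * ‖S‖) *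
        RCLike.re (star y ⬝ᵥ ((observationCov (H + E) S)⁻¹ *ᵥ y)) := by
  simpa only [smul_mulVec, dotProduct_smul, RCLike.smul_re] using
    re_dotProduct_mulVec_mono (inv_observationCov_le hS H E) y

theorem stmt10_general {Hc E : Matrix m n 𝕜} {β ρ : ℝ} (hHc : ‖Hc‖ ≤ β) (hE : ‖E‖ ≤ ρ)
    (hS : S.PosSemidef) {η' : ℝ} {y : m → 𝕜}
    (hy : 1 - η' ≤ 1 / (Fintype.card m : ℝ) *
      RCLike.re (star y ⬝ᵥ ((observationCov Hc S)⁻¹ *ᵥ y))) :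
    Fintype.card m * max (1 - η') 0 /
        (1 + ρ * (ρ + 2 * β) * ⨆ i, hS.isHermitian.eigenvalues i) ≤
      RCLike.re (star y ⬝ᵥ ((observationCov (Hc + E) S)⁻¹ *ᵥ y)) := by
  have hβ : 0 ≤ β := (norm_nonneg Hc).trans hHc
  have hρ : 0 ≤ ρ := (norm_nonneg E).trans hE
  let q (H : Matrix m n 𝕜) : ℝ := RCLike.re (star y ⬝ᵥ ((observationCov H S)⁻¹ *ᵥ y))
  have hq (H) : 0 ≤ q H := (observationCov_posDef hS H).inv.posSemidef.re_dotProduct_nonneg y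
  rw [← l2_opNorm_eq_iSup_eigenvalues hS, div_le_iff₀' (by positivity)]
  calc Fintype.card m * max (1 - η') 0
      ≤ Fintype.card m * (1 / Fintype.card m * q Hc) := by
        grw [max_le hy (mul_nonneg (by positivity) (hq Hc))]
    _ ≤ q Hc := by
        rw [← mul_assoc, one_div]
        exact mul_le_of_le_one_left (hq Hc) mul_inv_le_one
    _ ≤ (1 + ‖E‖ * (‖E‖ + 2 * ‖Hc‖) * ‖S‖) * q (Hc + E) :=
        re_dotProduct_inv_observationCov_le hS Hc E y
    _ ≤ (1 + ρ * (ρ + 2 * β) * ‖S‖) * q (Hc + E) := by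
        gcongr
        exact hq (Hc + E)

end LoewnerOrder

/-- If `‖H_c‖ ≤ β`, `‖E‖ ≤ ρ`, `Σ ≻ 0`, `H = H_c + E`, `Ω_c = I_m + H_cΣH_cᵀ`,
`Ω_H = I_m + HΣHᵀ`, then for every `η' > 0` and `y ∈ ℝ^m` with `(1/m)·yᵀΩ_c⁻¹y > 1 − η'`:
`yᵀΩ_H⁻¹y ≥ m · max(1−η',0) / (1 + ρ(ρ+2β)·λ_max(Σ))`. -/
theorem stmt10 (m n : ℕ) (Hc E : Matrix (Fin m) (Fin n) ℝ) (β ρ : ℝ)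
    (hHc : specNorm Hc ≤ β) (hE : specNorm E ≤ ρ)
    (S : Matrix (Fin n) (Fin n) ℝ) (hS : S.PosDef)
    (η' : ℝ) (hη : 0 < η') (y : Fin m → ℝ)
    (hy : 1 - η' <
      (1 / (m : ℝ)) * (y ⬝ᵥ (((1 : Matrix (Fin m) (Fin m) ℝ) + Hc * S * Hcᵀ)⁻¹ *ᵥ y))) :
    (m : ℝ) * max (1 - η') 0 /
        (1 + ρ * (ρ + 2 * β) * (⨆ i, hS.isHermitian.eigenvalues i))
      ≤ y ⬝ᵥ (((1 : Matrix (Fin m) (Fin m) ℝ) + (Hc + E) * S * (Hc + E)ᵀ)⁻¹ *ᵥ y) := by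
  rw [specNorm_eq_l2_opNorm] at hHc hE
  simpa [observationCov] using
    stmt10_general hHc hE hS.posSemidef (by simpa [observationCov] using hy.le)
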